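/- Identification of the local average treatment effect by the Wald ratio: under consistency, instrument randomization, monotonicity, relevance, and 0 < P(Z=1) < 1, one has E[A | Z=1] − E[A | Z=0] = P(A^1=1, A^0=0) > 0, and E[Y^1 − Y^0 | A^1=1, A^0=0] = (E[Y | Z=1] − E[Y | Z=0]) / (E[A | Z=1] − E[A | Z=0]). -/

import Mathlib

open Classical

noncomputable section

/-- Probability of the event `S` under the probability mass function `P`
on a finite sample space. -/
def pr {Ω : Type} [Fintype Ω] (P : Ω → ℝ) (S : Ω → Prop) : ℝ :=
  ∑ ω, if S ω then P ω else 0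

/-- Conditional probability of `S` given `T`, with the convention that it is `0`
when the conditioning event is null (in Lean, `x / 0 = 0`). -/
def cpr {Ω : Type} [Fintype Ω] (P : Ω → ℝ) (S T : Ω → Prop) : ℝ :=
  pr P (fun ω => S ω ∧ T ω) / pr P T

/-- Expectation of `X` under `P`. -/
def expec {Ω : Type} [Fintype Ω] (P : Ω → ℝ) (X : Ω → ℝ) : ℝ :=
  ∑ ω, X ω * P ω

/-- Conditional expectation of `X` given the event `T`, with the convention that
it is `0` when the conditioning event is null. -/
def cexp {Ω : Type} [Fintype Ω] (P : Ω → ℝ) (X : Ω → ℝ) (T : Ω → Prop) : ℝ :=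
  (∑ ω, if T ω then X ω * P ω else 0) / pr P T

/-!
The numerator and the denominator of the Wald ratio are two cases of one identity. If a response `X`
equals `W^A` for potential responses `W^0, W^1`, then on `{Z = z}` it equals `W^(A^z)`, and
randomization removes the conditioning, so that
`E[X | Z = 1] - E[X | Z = 0] = E[W^(A^1) - W^(A^0)]`.
By monotonicity the integrand is `W^1 - W^0` on the compliers and vanishes elsewhere.
The numerator is the case `W^a = Y^a`, the denominator the case `W^a = a`.
-/

section Expectation

variable {Ω : Type} [Fintype Ω] {P : Ω → ℝ}

lemma pr_eq_expec_ite (T : Ω → Prop) [DecidablePred T] :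
    pr P T = expec P (fun ω => if T ω then 1 else 0) := by
  simp only [pr, expec, ite_mul, one_mul, zero_mul]
  congr!

lemma cexp_eq_expec_ite_div_pr (X : Ω → ℝ) (T : Ω → Prop) [DecidablePred T] :
    cexp P X T = expec P (fun ω => if T ω then X ω else 0) / pr P T := by
  simp only [cexp, expec, ite_mul, zero_mul]
  congr!

lemma expec_sub (X X' : Ω → ℝ) :
    expec P (fun ω => X ω - X' ω) = expec P X - expec P X' := by
  simp only [expec, sub_mul, Finset.sum_sub_distrib]

lemma expec_congr_of_ne_zero {X X' : Ω → ℝ} (h : ∀ ω, P ω ≠ 0 → X ω = X' ω) :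
    expec P X = expec P X' := by
  refine Finset.sum_congr rfl fun ω _ => ?_
  by_cases hω : P ω = 0
  · rw [hω, mul_zero, mul_zero]
  · rw [h ω hω]

lemma cexp_congr {X X' : Ω → ℝ} {T : Ω → Prop} (h : ∀ ω, T ω → X ω = X' ω) :
    cexp P X T = cexp P X' T := by
  simp only [cexp_eq_expec_ite_div_pr]
  congr 2 with ω
  exact ite_congr rfl (h ω) fun _ => rfl

lemma sum_pr_fiber {ι : Type*} [Fintype ι] (Z : Ω → ι) :
    ∑ z, pr P (fun ω => Z ω = z) = ∑ ω, P ω := by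
  simp only [pr]
  rw [Finset.sum_comm]
  simp only [Finset.sum_ite_eq, Finset.mem_univ, if_true]

lemma expec_ite_comp {β : Type*} (V : Ω → β) (g : β → ℝ) (T : Ω → Prop) :
    expec P (fun ω => if T ω then g (V ω) else 0)
      = ∑ v ∈ Finset.univ.image V, g v * pr P (fun ω => V ω = v ∧ T ω) := by
  simp only [expec, pr, Finset.mul_sum]
  rw [Finset.sum_comm]
  refine Finset.sum_congr rfl fun ω _ => ?_
  rw [Finset.sum_eq_single_of_mem (V ω) (Finset.mem_image_of_mem V (Finset.mem_univ ω))
    fun v _ hv => by simp [hv.symm]]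
  simp

lemma expec_comp {β : Type*} (V : Ω → β) (g : β → ℝ) :
    expec P (fun ω => g (V ω)) = ∑ v ∈ Finset.univ.image V, g v * pr P (fun ω => V ω = v) := by
  simpa using expec_ite_comp V g (fun _ => True)

end Expectation

/-- Independence of the random variable `V` and the event `T`. Since the sample space is finite,
it is enough to ask that the probabilities of the point events `{V = v}` factor. -/
def IndepOfEvent {Ω : Type} [Fintype Ω] {β : Type*} (P : Ω → ℝ) (V : Ω → β) (T : Ω → Prop) :
    Prop :=
  ∀ v, pr P (fun ω => V ω = v ∧ T ω) = pr P (fun ω => V ω = v) * pr P T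

theorem IndepOfEvent.cexp_comp {Ω : Type} [Fintype Ω] {β : Type*} {P : Ω → ℝ} {V : Ω → β}
    {T : Ω → Prop} (hVT : IndepOfEvent P V T) (hT : pr P T ≠ 0) (g : β → ℝ) :
    cexp P (fun ω => g (V ω)) T = expec P (fun ω => g (V ω)) := by
  rw [cexp_eq_expec_ite_div_pr, div_eq_iff hT, expec_ite_comp, expec_comp, Finset.sum_mul]
  exact Finset.sum_congr rfl fun v _ => by rw [hVT v, mul_assoc]

lemma apply_sub_apply_of_le {G : Type*} [AddGroup G] (w : Fin 2 → G) {a₀ a₁ : Fin 2}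
    (h : a₀ ≤ a₁) : w a₁ - w a₀ = if a₁ = 1 ∧ a₀ = 0 then w 1 - w 0 else 0 := by
  fin_cases a₀ <;> fin_cases a₁ <;> simp at h ⊢

theorem cexp_sub_cexp_eq_expec_compliers {Ω : Type} [Fintype Ω] {P : Ω → ℝ} {Z A : Ω → Fin 2}
    {X : Ω → ℝ} {Ac : Fin 2 → Ω → Fin 2} {W : Fin 2 → Ω → ℝ}
    (hconsA : ∀ z ω, Z ω = z → A ω = Ac z ω) (hconsX : ∀ a ω, A ω = a → X ω = W a ω)
    (hmean : ∀ z, cexp P (fun ω => W (Ac z ω) ω) (fun ω => Z ω = z)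
      = expec P (fun ω => W (Ac z ω) ω))
    (hmono : ∀ ω, P ω ≠ 0 → Ac 0 ω ≤ Ac 1 ω) :
    cexp P X (fun ω => Z ω = 1) - cexp P X (fun ω => Z ω = 0)
      = expec P (fun ω => if Ac 1 ω = 1 ∧ Ac 0 ω = 0 then W 1 ω - W 0 ω else 0) := by
  have uncondition : ∀ z, cexp P X (fun ω => Z ω = z) = expec P (fun ω => W (Ac z ω) ω) :=
    fun z => (cexp_congr fun ω hω => hconsX _ ω (hconsA z ω hω)).trans (hmean z)
  rw [uncondition, uncondition, ← expec_sub]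
  exact expec_congr_of_ne_zero fun ω hω => apply_sub_apply_of_le (W · ω) (hmono ω hω)

/-- Identification of the local average treatment effect by the
Wald ratio: under consistency, instrument randomization, monotonicity, relevance,
and `0 < P(Z=1) < 1`, the first-stage difference `E[A|Z=1] − E[A|Z=0]` equals the
(positive) complier proportion `P(A^1=1, A^0=0)`, and the complier average causal
effect equals the Wald ratio. -/
theorem late_wald_identification
    (Ω : Type) [Fintype Ω]
    (P : Ω → ℝ) (hP0 : ∀ ω, 0 ≤ P ω) (hP1 : (∑ ω, P ω) = 1)
    (Z A : Ω → Fin 2) (Y : Ω → ℝ)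
    (Ac : Fin 2 → Ω → Fin 2) (Yc : Fin 2 → Ω → ℝ)
    -- consistency
    (hconsA : ∀ (z : Fin 2) (ω : Ω), Z ω = z → A ω = Ac z ω)
    (hconsY : ∀ (a : Fin 2) (ω : Ω), A ω = a → Y ω = Yc a ω)
    -- instrument randomization: (A^0, A^1, Y^0, Y^1) ⟂ Z
    (hrand : ∀ (a0 a1 : Fin 2) (y0 y1 : ℝ) (z : Fin 2),
      pr P (fun ω => Ac 0 ω = a0 ∧ Ac 1 ω = a1 ∧ Yc 0 ω = y0 ∧ Yc 1 ω = y1 ∧ Z ω = z)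
        = pr P (fun ω => Ac 0 ω = a0 ∧ Ac 1 ω = a1 ∧ Yc 0 ω = y0 ∧ Yc 1 ω = y1)
            * pr P (fun ω => Z ω = z))
    -- monotonicity: A^1 ≥ A^0 almost surely
    (hmono : ∀ ω : Ω, P ω ≠ 0 → Ac 0 ω ≤ Ac 1 ω)
    -- relevance
    (hrel : 0 < pr P (fun ω => Ac 1 ω = 1 ∧ Ac 0 ω = 0))
    -- 0 < P(Z=1) < 1
    (hz0 : 0 < pr P (fun ω => Z ω = 1))
    (hz1 : pr P (fun ω => Z ω = 1) < 1) :
    (cexp P (fun ω => ((A ω : ℕ) : ℝ)) (fun ω => Z ω = 1)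
        - cexp P (fun ω => ((A ω : ℕ) : ℝ)) (fun ω => Z ω = 0)
      = pr P (fun ω => Ac 1 ω = 1 ∧ Ac 0 ω = 0))
    ∧ (0 < cexp P (fun ω => ((A ω : ℕ) : ℝ)) (fun ω => Z ω = 1)
        - cexp P (fun ω => ((A ω : ℕ) : ℝ)) (fun ω => Z ω = 0))
    ∧ (cexp P (fun ω => Yc 1 ω - Yc 0 ω) (fun ω => Ac 1 ω = 1 ∧ Ac 0 ω = 0)
      = (cexp P Y (fun ω => Z ω = 1) - cexp P Y (fun ω => Z ω = 0))
        / (cexp P (fun ω => ((A ω : ℕ) : ℝ)) (fun ω => Z ω = 1)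
            - cexp P (fun ω => ((A ω : ℕ) : ℝ)) (fun ω => Z ω = 0))) := by
  have pr_Z_ne_zero : ∀ z, pr P (fun ω => Z ω = z) ≠ 0 := by
    have htotal := (sum_pr_fiber Z).trans hP1
    rw [Fin.sum_univ_two] at htotal
    exact Fin.forall_fin_two.2 ⟨by linarith, hz0.ne'⟩
  have indep : ∀ z, IndepOfEvent P (fun ω => ((Ac · ω), (Yc · ω))) (fun ω => Z ω = z) := by
    rintro z ⟨a, y⟩
    simpa only [Prod.mk.injEq, funext_iff, Fin.forall_fin_two, and_assoc]
      using hrand (a 0) (a 1) (y 0) (y 1) z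
  have first_stage : cexp P (fun ω => ((A ω : ℕ) : ℝ)) (fun ω => Z ω = 1)
        - cexp P (fun ω => ((A ω : ℕ) : ℝ)) (fun ω => Z ω = 0)
      = pr P (fun ω => Ac 1 ω = 1 ∧ Ac 0 ω = 0) := by
    rw [cexp_sub_cexp_eq_expec_compliers (W := fun a _ => ((a : ℕ) : ℝ)) hconsA
      (fun a ω h => by rw [h])
      (fun z => (indep z).cexp_comp (pr_Z_ne_zero z) fun v => ((v.1 z : ℕ) : ℝ)) hmono,
      pr_eq_expec_ite]
    simp
  have reduced_form := cexp_sub_cexp_eq_expec_compliers hconsA hconsY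
    (fun z => (indep z).cexp_comp (pr_Z_ne_zero z) fun v => v.2 (v.1 z)) hmono
  exact ⟨first_stage, first_stage ▸ hrel,
    by rw [first_stage, reduced_form, cexp_eq_expec_ite_div_pr]⟩
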